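/- For all shifts ℓ₁, ℓ₂ ∈ {0, 1, …, L−1}, the third-order autocorrelation of the clean signal equals p times that of the target signal: Σ_{j∈ℤ} s[j] · s[j+ℓ₁] · s[j+ℓ₂] = p · Σ_{j∈ℤ} x[j] · x[j+ℓ₁] · x[j+ℓ₂] (both sums have finitely many nonzero terms). -/

import Mathlib

/-!
Points of two windows of length `L` that begin at least `2L - 1` apart are at distance at least `L`,
so a shift by less than `L` cannot carry one translate of `x` onto another. Hence all cross terms
vanish when the autocorrelation of the sum of the translates is expanded, and each of the `p`
diagonal terms is the autocorrelation of a translate of `x`, hence that of `x`.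
-/

open scoped translate

lemma hasFiniteSupport_translate {G M : Type*} [AddCommGroup G] [Zero M] {y : G → M}
    (hy : y.HasFiniteSupport) (a : G) : (τ a y).HasFiniteSupport :=
  Function.HasFiniteSupport.comp_of_injective (sub_left_injective (b := a)) hy

section Autocorrelation

variable {G R ι κ : Type*} [Fintype κ] [CommSemiring R]

/-- The autocorrelation of order `|κ| + 1` of a signal `y` on `G`, as a function of the family `t`
of shifts; the unshifted factor is kept apart from the `|κ|` shifted ones. For `κ = Fin 2` this is
the third-order autocorrelation. The sum is meaningful for finitely supported `y`. -/
noncomputable def autocorrelation [Add G] (t : κ → G) (y : G → R) : R :=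
  ∑ᶠ j, y j * ∏ k, y (j + t k)

lemma autocorrelation_translate [AddCommGroup G] (t : κ → G) (a : G) (y : G → R) :
    autocorrelation t (τ a y) = autocorrelation t y := by
  simp only [autocorrelation, translate_apply, add_sub_right_comm]
  exact finsum_comp_equiv (Equiv.subRight a) (f := fun j => y j * ∏ k, y (j + t k))

lemma autocorrelation_sum [Add G] [Fintype ι] {t : κ → G} {y : ι → G → R}
    (hfin : ∀ i, (y i).HasFiniteSupport)
    (hcross : ∀ i i', i ≠ i' → ∀ k j, y i j ≠ 0 → y i' (j + t k) = 0) :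
    autocorrelation t (∑ i, y i) = ∑ i, autocorrelation t (y i) := by
  have diagonal (i : ι) (j : G) :
      y i j * ∏ k, ∑ i', y i' (j + t k) = y i j * ∏ k, y i (j + t k) := by
    by_cases hj : y i j = 0
    · rw [hj, zero_mul, zero_mul]
    · congr! 2 with k
      exact Fintype.sum_eq_single i fun i' hi' => hcross i i' hi'.symm k j hj
  simp only [autocorrelation, Finset.sum_apply, Finset.sum_mul, diagonal]
  exact finsum_sum_comm _ _ fun i _ => (hfin i).mul_left _

end Autocorrelation

lemma translate_add_eq_zero_of_separated {M : Type*} [Zero M] {L : ℤ} {x : ℤ → M}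
    (hx : ∀ j ∉ Set.Ico 0 L, x j = 0) {a b t j : ℤ} (hab : 2 * L - 1 ≤ |a - b|) (ht : |t| < L)
    (hj : τ a x j ≠ 0) : τ b x (j + t) = 0 := by
  have hja : j - a ∈ Set.Ico 0 L := not_imp_comm.mp (hx (j - a)) hj
  refine hx _ fun hjb => hab.not_gt ?_
  simp only [Set.mem_Ico] at hja hjb
  rw [abs_lt] at ht ⊢
  omega

theorem clean_signal_third_autocorrelation_general {R ι κ : Type*} [CommSemiring R] [Fintype ι]
    [Fintype κ] {L : ℤ} {x : ℤ → R} (hx : ∀ j ∉ Set.Ico 0 L, x j = 0) {ℓ : ι → ℤ}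
    (hsep : ∀ i₁ i₂, i₁ ≠ i₂ → 2 * L - 1 ≤ |ℓ i₁ - ℓ i₂|) {s : ℤ → R}
    (hs : ∀ j, s j = ∑ i, x (j - ℓ i)) {t : κ → ℤ} (ht : ∀ k, |t k| < L) :
    autocorrelation t s = Fintype.card ι * autocorrelation t x := by
  have hx_fin : x.HasFiniteSupport :=
    (Set.finite_Ico 0 L).subset (Function.support_subset_iff'.mpr hx)
  have hs_translate : s = ∑ i, τ (ℓ i) x := by
    ext j
    simp only [hs, Finset.sum_apply, translate_apply]
  calc
    autocorrelation t s = ∑ i, autocorrelation t (τ (ℓ i) x) := by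
      rw [hs_translate]
      exact autocorrelation_sum (fun i => hasFiniteSupport_translate hx_fin (ℓ i))
        fun i i' hi k _ => translate_add_eq_zero_of_separated hx (hsep i i' hi) (ht k)
    _ = Fintype.card ι * autocorrelation t x := by
      simp only [autocorrelation_translate, Finset.sum_const, Finset.card_univ, nsmul_eq_mul]

/-- **Third-order autocorrelation of the clean signal.**
Under the separation condition, for shifts `t₁, t₂ ∈ {0, …, L-1}`, the third-order
autocorrelation of `s[j] = ∑_i x[j - ℓ_i]` equals `p` times that of `x`. -/
theorem clean_signal_third_autocorrelation
    (L p : ℕ) (hL : 1 ≤ L) (hp : 1 ≤ p)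
    (x : ℤ → ℝ) (hx : ∀ j : ℤ, j ∉ Set.Ico (0 : ℤ) (L : ℤ) → x j = 0)
    (ℓ : Fin p → ℤ)
    (hsep : ∀ i₁ i₂ : Fin p, i₁ ≠ i₂ → 2 * (L : ℤ) - 1 ≤ |ℓ i₁ - ℓ i₂|)
    (s : ℤ → ℝ) (hs : ∀ j : ℤ, s j = ∑ i : Fin p, x (j - ℓ i))
    (t₁ t₂ : ℤ) (ht₁ : t₁ ∈ Set.Icc (0 : ℤ) ((L : ℤ) - 1)) (ht₂ : t₂ ∈ Set.Icc (0 : ℤ) ((L : ℤ) - 1)) :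
    ∑ᶠ j : ℤ, s j * s (j + t₁) * s (j + t₂) = (p : ℝ) * ∑ᶠ j : ℤ, x j * x (j + t₁) * x (j + t₂) := by
  have ht : ∀ k, |![t₁, t₂] k| < (L : ℤ) := Fin.forall_fin_two.mpr
    ⟨(abs_of_nonneg ht₁.1).trans_lt (Int.lt_of_le_sub_one ht₁.2),
      (abs_of_nonneg ht₂.1).trans_lt (Int.lt_of_le_sub_one ht₂.2)⟩
  simpa [autocorrelation, mul_assoc] using
    clean_signal_third_autocorrelation_general hx hsep hs ht
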